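/- Let s > 3/2 and ε, μ ∈ (0,1]. There is a constant c = c(s), independent of ε, μ and T, such that for every T > 0 and every solution η of the Whitham equation ∂_t η + √T_μ(D) ∂_x η + (ε/2) ∂_x(η²) = 0 on [0,T], with t ↦ η(·,t) a C¹ curve in the Schwartz space 𝓢(ℝ), one has (d/dt) ‖η(t)‖_{H^s}^2 ≤ c ε ‖∂_x η(t)‖_{L^∞} ‖η(t)‖_{H^s}^2 for all t ∈ (0,T). -/

import Mathlib

noncomputable section

open MeasureTheory SchwartzMap
open scoped FourierTransform ENNReal

/-- The Japanese bracket `⟨x⟩ = (1 + x²)^{1/2}`. -/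
def jap (x : ℝ) : ℝ := (1 + x ^ 2) ^ ((1 : ℝ) / 2)

/-- The symbol `T_μ(ξ) = tanh(√μ |ξ|)/(√μ |ξ|)` for `ξ ≠ 0`, with value `1` at `ξ = 0`. -/
def Tsymb (μ ξ : ℝ) : ℝ :=
  if ξ = 0 then 1 else Real.tanh (Real.sqrt μ * |ξ|) / (Real.sqrt μ * |ξ|)

/-- Complexification of a real-valued function. -/
def cc (f : ℝ → ℝ) : ℝ → ℂ := fun x => (f x : ℂ)

/-- The multiplier `√T_μ(D)`, `(√T_μ(D) g)^(ξ) = T_μ(ξ)^{1/2} ĝ(ξ)`. -/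
def sqrtTmul (μ : ℝ) (g : ℝ → ℂ) : ℝ → ℂ :=
  𝓕⁻ (fun ξ : ℝ => ((Real.sqrt (Tsymb μ ξ) : ℝ) : ℂ) * 𝓕 g ξ)

/-- The `H^s`-norm `‖f‖_{H^s} = ‖⟨ξ⟩^s f̂‖_{L²}` (as an extended nonnegative real). -/
def HsNorm (s : ℝ) (f : ℝ → ℂ) : ℝ≥0∞ :=
  eLpNorm (fun ξ : ℝ => jap ξ ^ s * ‖𝓕 f ξ‖) 2 volume

section WhithamHelpers

def sg (h ζ : ℂ) : ℂ := Complex.exp (((2 * Real.pi * (h * ζ).re : ℝ) : ℂ) * Complex.I) - 1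

lemma sg_norm_le_two (h ζ : ℂ) : ‖sg h ζ‖ ≤ 2 := by
  unfold sg
  refine (norm_sub_le _ _).trans ?_
  rw [Complex.norm_exp_ofReal_mul_I]; norm_num

lemma sg_norm_le (h ζ : ℂ) : ‖sg h ζ‖ ≤ 2 * Real.pi * (‖h‖ * ‖ζ‖) := by
  unfold sg
  have := Real.norm_exp_I_mul_ofReal_sub_one_le (x := 2 * Real.pi * (h * ζ).re)
  rw [mul_comm Complex.I] at this
  refine this.trans ?_
  rw [Real.norm_eq_abs, abs_mul, abs_of_pos (by positivity), ← norm_mul]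
  gcongr
  exact Complex.abs_re_le_norm _

lemma sg_continuous : Continuous (fun p : ℂ × ℂ => sg p.1 p.2) := by
  unfold sg
  fun_prop

lemma kernel_integrable (m : ℕ) (r : ℝ) (hr : 0 < r) (hm : r < m) :
    Integrable (fun h : ℂ => ‖sg h 1‖ ^ (2 * m) * ‖h‖ ^ (-2 - 2 * r)) := by
  let g : ℝ → ℝ := fun y => if y ≤ 1 then (2 * Real.pi) ^ (2 * m) * y ^ (2 * (m : ℝ) - 2 - 2 * r)
    else 2 ^ (2 * m) * y ^ (-2 - 2 * r)
  have hg : Integrable (fun h : ℂ => g ‖h‖) := by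
    rw [integrable_fun_norm_addHaar volume (f := g)]
    rw [Complex.finrank_real_complex]
    rw [← Set.Ioc_union_Ioi_eq_Ioi (zero_le_one' ℝ), integrableOn_union]
    constructor
    · have h1 : IntegrableOn (fun y : ℝ => (2 * Real.pi) ^ (2 * m) * y ^ (2 * (m : ℝ) - 1 - 2 * r))
          (Set.Ioc 0 1) := by
        apply Integrable.const_mul
        have := intervalIntegral.intervalIntegrable_rpow' (a := 0) (b := 1)
          (r := 2 * (m : ℝ) - 1 - 2 * r) (by linarith)
        rwa [intervalIntegrable_iff_integrableOn_Ioc_of_le zero_le_one] at this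
      refine h1.congr_fun ?_ measurableSet_Ioc
      intro y hy
      simp only [g, if_pos hy.2, smul_eq_mul]
      have : 2 * (m : ℝ) - 1 - 2 * r = (2 * (m : ℝ) - 2 - 2 * r) + 1 := by ring
      rw [this, Real.rpow_add hy.1, Real.rpow_one]
      ring
    · have h1 : IntegrableOn (fun y : ℝ => 2 ^ (2 * m) * y ^ (-1 - 2 * r))
          (Set.Ioi 1) := by
        apply Integrable.const_mul
        exact integrableOn_Ioi_rpow_of_lt (by linarith) one_pos
      refine h1.congr_fun ?_ measurableSet_Ioi
      intro y hy
      have hy : 1 < y := hy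
      simp only [g, if_neg (not_le.2 hy), smul_eq_mul]
      have : -1 - 2 * r = (-2 - 2 * r) + 1 := by ring
      rw [this, Real.rpow_add (by linarith), Real.rpow_one]
      ring
  refine hg.mono' ?_ ?_
  · have : Measurable (fun h : ℂ => sg h 1) :=
      (sg_continuous.comp (by fun_prop : Continuous fun h : ℂ => (h, (1 : ℂ)))).measurable
    apply Measurable.aestronglyMeasurable
    fun_prop
  · refine (ae_iff.2 ?_ : ∀ᵐ h : ℂ, h ≠ 0).mono ?_
    · simp
    intro h hh
    have hpos : 0 < ‖h‖ := norm_pos_iff.2 hh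
    rw [Real.norm_of_nonneg (by positivity)]
    simp only [g]
    split_ifs with h1
    · have : 2 * (m : ℝ) - 2 - 2 * r = (2 * m : ℕ) + (-2 - 2 * r) := by push_cast; ring
      rw [this, Real.rpow_add hpos, Real.rpow_natCast, ← mul_assoc, ← mul_pow]
      have := sg_norm_le h 1
      rw [norm_one, mul_one] at this
      gcongr
    · gcongr
      exact sg_norm_le_two _ _

lemma kernel_pos (m : ℕ) (r : ℝ) (hr : 0 < r) (hm : r < m) :
    0 < ∫ h : ℂ, ‖sg h 1‖ ^ (2 * m) * ‖h‖ ^ (-2 - 2 * r) := by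
  rw [integral_pos_iff_support_of_nonneg (fun h => by positivity) (kernel_integrable m r hr hm)]
  have hc : Continuous (fun h : ℂ => sg h 1) :=
      (sg_continuous.comp (by fun_prop : Continuous fun h : ℂ => (h, (1 : ℂ))))
  have ho : IsOpen {h : ℂ | sg h 1 ≠ 0 ∧ h ≠ 0} :=
    (isOpen_ne_fun hc continuous_const).inter isOpen_ne
  have hne : ({h : ℂ | sg h 1 ≠ 0 ∧ h ≠ 0}).Nonempty := by
    refine ⟨((1 / 2 : ℝ) : ℂ), ?_, by norm_num⟩
    unfold sg
    rw [mul_one, Complex.ofReal_re]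
    have : 2 * Real.pi * (1 / 2) = Real.pi := by ring
    rw [this, Complex.exp_pi_mul_I]; norm_num
  refine lt_of_lt_of_le (ho.measure_pos volume hne) (measure_mono ?_)
  rintro h ⟨h1, h2⟩
  rw [Function.mem_support]
  have h3 : 0 < ‖sg h 1‖ := norm_pos_iff.2 h1
  have h4 : 0 < ‖h‖ := norm_pos_iff.2 h2
  positivity

lemma kernel (m : ℕ) (r : ℝ) (hr : 0 < r) (hm : r < m) :
    ∃ C : ℝ, 0 < C ∧ ∀ ζ : ℂ, Integrable (fun h : ℂ => ‖sg h ζ‖ ^ (2 * m) * ‖h‖ ^ (-2 - 2 * r)) ∧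
      ∫ h : ℂ, ‖sg h ζ‖ ^ (2 * m) * ‖h‖ ^ (-2 - 2 * r) = C * ‖ζ‖ ^ (2 * r) := by
  refine ⟨_, kernel_pos m r hr hm, fun ζ => ?_⟩
  rcases eq_or_ne ζ 0 with rfl | hζ
  · have h0 : ∀ h, sg h 0 = 0 := by intro h; simp [sg]
    have hm0 : m ≠ 0 := by
      rintro rfl; simp at hm; linarith
    have : (2 * r) ≠ 0 := by linarith
    simp [h0, hm0, Real.zero_rpow this]
  set f : ℂ → ℝ := fun h : ℂ => ‖sg h 1‖ ^ (2 * m) * ‖h‖ ^ (-2 - 2 * r) with hf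
  have hn : 0 < ‖ζ‖ := norm_pos_iff.2 hζ
  have hmul : ∀ h : ℂ, sg h ζ = sg (h * ζ) 1 := by intro h; simp [sg]
  have key : (fun h : ℂ => ‖sg h ζ‖ ^ (2 * m) * ‖h‖ ^ (-2 - 2 * r)) =
      fun h => ‖ζ‖ ^ (2 + 2 * r) * f (h * ζ) := by
    ext h
    simp only [hf, ← hmul, norm_mul]
    rw [Real.mul_rpow (norm_nonneg _) (norm_nonneg _)]
    have : ‖ζ‖ ^ (2 + 2 * r) * ‖ζ‖ ^ (-2 - 2 * r) = 1 := by
      rw [← Real.rpow_add hn]; ring_nf; simp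
    linear_combination (-(‖sg h ζ‖ ^ (2 * m) * ‖h‖ ^ (-2 - 2 * r))) * this
  let c : Circle := ⟨ζ / ‖ζ‖, by simp [Submonoid.unitSphere, hζ]⟩
  have hrot : ∀ h : ℂ, h * ζ = rotation c (‖ζ‖ • h) := by
    intro h
    have : (‖ζ‖ : ℂ) ≠ 0 := by exact_mod_cast hn.ne'
    rw [rotation_apply, Complex.real_smul]
    change h * ζ = ζ / ‖ζ‖ * (‖ζ‖ * h)
    field_simp
  have hfi := kernel_integrable m r hr hm
  have hmp := (rotation c).measurePreserving
  have hme : MeasurableEmbedding (rotation c) :=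
    (rotation c).toHomeomorph.measurableEmbedding
  have hfr : Integrable (fun h => f (rotation c h)) := (hmp.integrable_comp_emb hme).2 hfi
  rw [key]
  constructor
  · apply Integrable.const_mul
    simp_rw [hrot]
    exact hfr.comp_smul hn.ne'
  · rw [integral_const_mul]
    simp_rw [hrot]
    rw [Measure.integral_comp_smul volume (fun h => f (rotation c h)), hmp.integral_comp hme,
      Complex.finrank_real_complex, smul_eq_mul, abs_of_pos (by positivity)]
    have : ‖ζ‖ ^ (2 + 2 * r) = ‖ζ‖ ^ 2 * ‖ζ‖ ^ (2 * r) := by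
      rw [Real.rpow_add hn]; norm_num
    rw [this]
    field_simp

def th (τ : ℝ) (h : ℂ) : ℂ := Complex.exp (((2 * Real.pi * (τ * h.im) : ℝ) : ℂ) * Complex.I)

lemma th_norm (τ : ℝ) (h : ℂ) : ‖th τ h‖ = 1 := by
  unfold th; rw [Complex.norm_exp_ofReal_mul_I]

def frq (τ : ℝ) (ξ : ℝ) : ℂ := ⟨ξ, -τ⟩

/-- twisted shift -/
def Sh (τ : ℝ) (h : ℂ) : Module.End ℂ 𝓢(ℝ, ℂ) :=
  th τ h • (compSubConstCLM ℂ (-h.re) : 𝓢(ℝ, ℂ) →L[ℂ] 𝓢(ℝ, ℂ)).toLinearMap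

def Df (τ : ℝ) (h : ℂ) : Module.End ℂ 𝓢(ℝ, ℂ) := Sh τ h - 1

lemma Sh_apply (τ : ℝ) (h : ℂ) (f : 𝓢(ℝ, ℂ)) (x : ℝ) :
    Sh τ h f x = th τ h * f (x + h.re) := by
  simp [Sh]

lemma Df_apply (τ : ℝ) (h : ℂ) (f : 𝓢(ℝ, ℂ)) (x : ℝ) :
    Df τ h f x = th τ h * f (x + h.re) - f x := by
  simp [Df, Sh_apply]

lemma Sh_fourier (τ : ℝ) (h : ℂ) (f : 𝓢(ℝ, ℂ)) (ξ : ℝ) :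
    𝓕 (Sh τ h f) ξ = (sg h (frq τ ξ) + 1) * 𝓕 f ξ := by
  rw [fourier_coe, fourier_coe, Real.fourier_real_eq_integral_exp_smul,
    Real.fourier_real_eq_integral_exp_smul]
  simp_rw [Sh_apply]
  rw [← integral_add_right_eq_self (μ := volume) _ (-h.re), ← integral_const_mul]
  congr 1
  ext x
  simp only [neg_add_cancel_right, sg, th, frq, smul_eq_mul, sub_add_cancel, Complex.mul_re]
  simp only [← mul_assoc, ← Complex.exp_add]
  congr 2
  push_cast
  ring

lemma Df_fourier (τ : ℝ) (h : ℂ) (f : 𝓢(ℝ, ℂ)) (ξ : ℝ) :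
    𝓕 (Df τ h f) ξ = sg h (frq τ ξ) * 𝓕 f ξ := by
  have h1 : Df τ h f = Sh τ h f - f := by simp [Df]
  have h2 : 𝓕 (Sh τ h f - f) = 𝓕 (Sh τ h f) - 𝓕 f := by
    simp only [← fourierTransformCLM_apply ℂ, map_sub]
  rw [h1, h2, sub_apply, Sh_fourier]
  ring

lemma Sh_pow_fourier (τ : ℝ) (h : ℂ) (j : ℕ) (f : 𝓢(ℝ, ℂ)) (ξ : ℝ) :
    𝓕 ((Sh τ h ^ j) f) ξ = (sg h (frq τ ξ) + 1) ^ j * 𝓕 f ξ := by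
  induction j with
  | zero => simp
  | succ j ih =>
    rw [pow_succ', Module.End.mul_apply, Sh_fourier, ih]; ring

lemma Df_pow_fourier (τ : ℝ) (h : ℂ) (j : ℕ) (f : 𝓢(ℝ, ℂ)) (ξ : ℝ) :
    𝓕 ((Df τ h ^ j) f) ξ = sg h (frq τ ξ) ^ j * 𝓕 f ξ := by
  induction j with
  | zero => simp
  | succ j ih =>
    rw [pow_succ', Module.End.mul_apply, Df_fourier, ih]; ring

lemma sg_add_one_norm (h ζ : ℂ) : ‖sg h ζ + 1‖ = 1 := by
  unfold sg
  rw [sub_add_cancel, Complex.norm_exp_ofReal_mul_I]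

def n2 (f : 𝓢(ℝ, ℂ)) : ℝ := ∫ x, ‖f x‖ ^ 2

lemma n2_integrable (f : 𝓢(ℝ, ℂ)) : Integrable (fun x => ‖f x‖ ^ 2) :=
  (memLp_two_iff_integrable_sq_norm f.continuous.aestronglyMeasurable).1 (f.memLp 2)

lemma n2_nonneg (f : 𝓢(ℝ, ℂ)) : 0 ≤ n2 f := integral_nonneg fun x => by positivity

lemma n2_fourier (f : 𝓢(ℝ, ℂ)) : n2 f = ∫ ξ, ‖𝓕 f ξ‖ ^ 2 := by
  rw [n2, integral_norm_sq_fourier]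

lemma n2_Sh (τ : ℝ) (h : ℂ) (j : ℕ) (f : 𝓢(ℝ, ℂ)) : n2 ((Sh τ h ^ j) f) = n2 f := by
  rw [n2_fourier, n2_fourier]
  simp_rw [Sh_pow_fourier, norm_mul, norm_pow, sg_add_one_norm, one_pow, one_mul]

lemma n2_Df (τ : ℝ) (h : ℂ) (j : ℕ) (f : 𝓢(ℝ, ℂ)) :
    n2 ((Df τ h ^ j) f) = ∫ ξ, ‖sg h (frq τ ξ)‖ ^ (2 * j) * ‖𝓕 f ξ‖ ^ 2 := by
  rw [n2_fourier]
  simp_rw [Df_pow_fourier, norm_mul, norm_pow, mul_pow, ← pow_mul, mul_comm 2 j]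

lemma n2_Df_integrable (τ : ℝ) (h : ℂ) (j : ℕ) (f : 𝓢(ℝ, ℂ)) :
    Integrable fun ξ => ‖sg h (frq τ ξ)‖ ^ (2 * j) * ‖𝓕 f ξ‖ ^ 2 := by
  have := n2_integrable (𝓕 ((Df τ h ^ j) f))
  simp_rw [Df_pow_fourier, norm_mul, norm_pow, mul_pow, ← pow_mul, mul_comm j 2] at this
  exact this

lemma n2_Df_le (τ : ℝ) (h : ℂ) (m i k : ℕ) (f : 𝓢(ℝ, ℂ)) (h1 : m ≤ i) (h2 : i ≤ k) :
    n2 ((Df τ h ^ i) f) ≤ 4 ^ k * n2 ((Df τ h ^ m) f) := by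
  rw [n2_Df, n2_Df, ← integral_const_mul]
  refine integral_mono (n2_Df_integrable _ _ _ _) ((n2_Df_integrable _ _ _ _).const_mul _) ?_
  intro ξ
  dsimp only
  rw [← mul_assoc]
  gcongr
  obtain ⟨d, rfl⟩ := Nat.exists_eq_add_of_le h1
  rw [mul_add, pow_add, mul_comm]
  gcongr
  calc ‖sg h (frq τ ξ)‖ ^ (2 * d) ≤ 2 ^ (2 * d) := by gcongr; exact sg_norm_le_two _ _
    _ = 4 ^ d := by rw [pow_mul]; norm_num
    _ ≤ 4 ^ k := by gcongr <;> linarith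

abbrev dv (f : 𝓢(ℝ, ℂ)) : 𝓢(ℝ, ℂ) := derivCLM ℂ ℂ f

lemma dv_Df (τ : ℝ) (h : ℂ) (f : 𝓢(ℝ, ℂ)) : dv (Df τ h f) = Df τ h (dv f) := by
  ext x
  have h1 : HasDerivAt (fun x => Df τ h f x) (th τ h * deriv f (x + h.re) - deriv f x) x := by
    simp_rw [Df_apply]
    exact (((f.hasDerivAt (x + h.re)).comp_add_const x h.re).const_mul _).sub (f.hasDerivAt x)
  rw [derivCLM_apply, Df_apply, derivCLM_apply, derivCLM_apply]
  exact h1.deriv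

lemma dv_Df_pow (τ : ℝ) (h : ℂ) (k : ℕ) (f : 𝓢(ℝ, ℂ)) :
    dv ((Df τ h ^ k) f) = (Df τ h ^ k) (dv f) := by
  induction k with
  | zero => simp
  | succ k ih => rw [pow_succ', Module.End.mul_apply, dv_Df, ih, Module.End.mul_apply]

abbrev pr (f g : 𝓢(ℝ, ℂ)) : 𝓢(ℝ, ℂ) := pairing (ContinuousLinearMap.mul ℂ ℂ) f g

lemma pr_apply (f g : 𝓢(ℝ, ℂ)) (x : ℝ) : pr f g x = f x * g x := by
  simp [pr]

def opA (h : ℂ) : Module.End ℂ (ℝ → ℝ → ℂ) where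
  toFun F := fun x y => th 1 h * (F (x + h.re) (y + h.re) - F x (y + h.re))
  map_add' F G := by ext x y; simp; ring
  map_smul' c F := by ext x y; simp; ring

def opB (h : ℂ) : Module.End ℂ (ℝ → ℝ → ℂ) where
  toFun F := fun x y => th 1 h * F x (y + h.re) - F x y
  map_add' F G := by ext x y; simp; ring
  map_smul' c F := by ext x y; simp; ring

lemma opAB (h : ℂ) : Commute (opA h) (opB h) := by
  ext F x y
  simp [opA, opB]; ring

lemma opA_pow (h : ℂ) (j : ℕ) (f g : 𝓢(ℝ, ℂ)) :
    (opA h ^ j) (fun x y => f x * g y) = fun x y => (Df 0 h ^ j) f x * (Sh 1 h ^ j) g y := by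
  induction j with
  | zero => simp
  | succ j ih =>
    rw [pow_succ', Module.End.mul_apply, ih, pow_succ', pow_succ']
    ext x y
    simp only [opA, Module.End.mul_apply, Df_apply, Sh_apply, LinearMap.coe_mk, AddHom.coe_mk]
    have : th 0 h = 1 := by simp [th]
    rw [this]; ring

lemma opB_pow (h : ℂ) (j : ℕ) (f g : 𝓢(ℝ, ℂ)) :
    (opB h ^ j) (fun x y => f x * g y) = fun x y => f x * (Df 1 h ^ j) g y := by
  induction j with
  | zero => simp
  | succ j ih =>
    rw [pow_succ', Module.End.mul_apply, ih, pow_succ']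
    ext x y
    simp only [opB, Module.End.mul_apply, Df_apply, LinearMap.coe_mk, AddHom.coe_mk]
    ring

lemma opAB_pow (h : ℂ) (k : ℕ) (f g : 𝓢(ℝ, ℂ)) (x : ℝ) :
    ((opA h + opB h) ^ k) (fun x y => f x * g y) x x = (Df 1 h ^ k) (pr f g) x := by
  induction k generalizing x with
  | zero => simp
  | succ k ih =>
    rw [pow_succ', Module.End.mul_apply, pow_succ', Module.End.mul_apply, Df_apply, ← ih, ← ih]
    simp [opA, opB]
    ring

lemma leibniz (h : ℂ) (k : ℕ) (f g : 𝓢(ℝ, ℂ)) (x : ℝ) :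
    (Df 1 h ^ k) (pr f g) x = ∑ j ∈ Finset.range (k + 1),
      (k.choose j : ℂ) * ((Df 0 h ^ j) f x * (Sh 1 h ^ j) ((Df 1 h ^ (k - j)) g) x) := by
  rw [← opAB_pow, (opAB h).add_pow]
  simp only [LinearMap.sum_apply, Finset.sum_apply]
  refine Finset.sum_congr rfl fun j _ => ?_
  rw [← Nat.cast_comm, ← nsmul_eq_mul, LinearMap.smul_apply, Module.End.mul_apply, opB_pow, opA_pow]
  simp

lemma Df0_bound (h : ℂ) (j : ℕ) (u : 𝓢(ℝ, ℂ)) (M : ℝ) (hM : ∀ x, ‖dv u x‖ ≤ M) (x : ℝ) :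
    ‖(Df 0 h ^ (j + 1)) u x‖ ≤ 2 ^ j * (‖h‖ * M) := by
  induction j generalizing x with
  | zero =>
    have : th 0 h = 1 := by simp [th]
    rw [pow_one, Df_apply, this, one_mul, pow_zero, one_mul]
    have := Convex.norm_image_sub_le_of_norm_deriv_le (f := u) (C := M) (s := Set.univ)
      (x := x) (y := x + h.re)
      (fun y _ => u.differentiableAt) (fun y _ => hM y) convex_univ trivial trivial
    refine this.trans ?_
    have hM0 : 0 ≤ M := (norm_nonneg _).trans (hM 0)
    rw [add_sub_cancel_left, mul_comm]
    gcongr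
    exact Complex.abs_re_le_norm h
  | succ j ih =>
    rw [pow_succ', Module.End.mul_apply, Df_apply]
    refine (norm_sub_le _ _).trans ?_
    rw [norm_mul, th_norm, one_mul]
    have h1 := ih (x + h.re)
    have h2 := ih x
    rw [pow_succ (2 : ℝ)]; linarith

lemma Sh_norm (τ : ℝ) (h : ℂ) (j : ℕ) (g : 𝓢(ℝ, ℂ)) (M : ℝ) (hM : ∀ x, ‖g x‖ ≤ M) (x : ℝ) :
    ‖(Sh τ h ^ j) g x‖ ≤ M := by
  induction j generalizing x with
  | zero => simpa using hM x
  | succ j ih =>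
    rw [pow_succ', Module.End.mul_apply, Sh_apply, norm_mul, th_norm, one_mul]
    exact ih _

lemma Df_norm (τ : ℝ) (h : ℂ) (j : ℕ) (g : 𝓢(ℝ, ℂ)) (M : ℝ) (hM : ∀ x, ‖g x‖ ≤ M) (x : ℝ) :
    ‖(Df τ h ^ j) g x‖ ≤ 2 ^ j * M := by
  induction j generalizing x with
  | zero => simpa using hM x
  | succ j ih =>
    rw [pow_succ', Module.End.mul_apply, Df_apply]
    refine (norm_sub_le _ _).trans ?_
    rw [norm_mul, th_norm, one_mul]
    have h1 := ih (x + h.re)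
    have h2 := ih x
    rw [pow_succ (2 : ℝ)]; linarith

open scoped ComplexConjugate

def cj (f : 𝓢(ℝ, ℂ)) : 𝓢(ℝ, ℂ) :=
  postcompCLM (𝕜 := ℝ) (Complex.conjCLE : ℂ →L[ℝ] ℂ) f

lemma cj_apply (f : 𝓢(ℝ, ℂ)) (x : ℝ) : cj f x = conj (f x) := by
  simp [cj]

lemma ibp (u w : 𝓢(ℝ, ℂ)) (hu : ∀ x, conj (u x) = u x) (M : ℝ) (hM : ∀ x, ‖dv u x‖ ≤ M) :
    |(∫ x, conj (w x) * (u x * dv w x)).re| ≤ M * n2 w := by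
  let P : 𝓢(ℝ, ℂ) := pr u (pr w (cj w))
  let Q1 : 𝓢(ℝ, ℂ) := pr (dv u) (pr w (cj w))
  let Q2 : 𝓢(ℝ, ℂ) := pr (cj w) (pr u (dv w))
  let Q3 : 𝓢(ℝ, ℂ) := cj Q2
  have hP : ∀ x, HasDerivAt P (Q1 x + (Q2 x + Q3 x)) x := by
    intro x
    have h1 := u.hasDerivAt x
    have h2 := w.hasDerivAt x
    have h3 : HasDerivAt (fun y => conj (w y)) (conj (deriv w x)) x := by
      have := (Complex.conjCLE : ℂ →L[ℝ] ℂ).hasFDerivAt.comp_hasDerivAt x h2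
      simpa [Function.comp_def] using this
    have h4 := h1.mul (h2.mul h3)
    have e : (P : ℝ → ℂ) = fun y => u y * (w y * conj (w y)) := by
      ext y; simp only [P, pr_apply, cj_apply]
    rw [e]
    convert! h4 using 1
    simp only [Q1, Q2, Q3, pr_apply, cj_apply, derivCLM_apply, map_mul, Complex.conj_conj, hu]
    simp only [Pi.mul_apply]
    ring
  have hIntg : Integrable (fun x => Q1 x + (Q2 x + Q3 x)) :=
    Q1.integrable.add (Q2.integrable.add Q3.integrable)
  have h0 := integral_eq_zero_of_hasDerivAt_of_integrable hP hIntg P.integrable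
  have hIntg2 : Integrable (fun x => Q2 x + Q3 x) := Q2.integrable.add Q3.integrable
  rw [integral_add Q1.integrable hIntg2,
    integral_add Q2.integrable Q3.integrable] at h0
  have hQ3 : ∫ x, Q3 x = conj (∫ x, Q2 x) := by
    rw [← integral_conj]; congr 1
  have hQ2 : ∫ x, conj (w x) * (u x * dv w x) = ∫ x, Q2 x := by
    congr 1
  have hQ1 : ‖∫ x, Q1 x‖ ≤ M * n2 w := by
    rw [n2, ← integral_const_mul]
    refine norm_integral_le_of_norm_le ((n2_integrable w).const_mul _) (.of_forall fun x => ?_)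
    simp only [Q1, pr_apply, cj_apply, norm_mul, RCLike.norm_conj]
    rw [← sq]
    gcongr
    exact hM x
  rw [hQ2]
  rw [hQ3] at h0
  have h5 := congrArg Complex.re h0
  simp at h5
  have h6 := (Complex.abs_re_le_norm _).trans hQ1
  have h7 : (∫ x, Q1 x).re = -(2 * (∫ x, Q2 x).re) := by linarith
  rw [h7, abs_neg, abs_mul, abs_two] at h6
  have := abs_nonneg (∫ x, Q2 x).re
  linarith

def Qf (m : ℕ) (u : 𝓢(ℝ, ℂ)) (h : ℂ) : ℝ :=
  n2 ((Df 1 h ^ m) u) + ‖h‖ ^ 2 * n2 ((Df 1 h ^ m) (dv u)) + n2 ((Df 0 h ^ m) u)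

lemma term_bound (a b : 𝓢(ℝ, ℂ)) (c : ℝ → ℂ) (K H : ℝ) (hK : 0 ≤ K)
    (hc : ∀ x, ‖c x‖ ≤ K * (H * ‖b x‖)) :
    ‖∫ x, conj (a x) * c x‖ ≤ K * (n2 a + H ^ 2 * n2 b) := by
  rw [n2, n2, ← integral_const_mul (H ^ 2), ← integral_add (n2_integrable a)
    ((n2_integrable b).const_mul _), ← integral_const_mul]
  refine norm_integral_le_of_norm_le
    (((n2_integrable a).add ((n2_integrable b).const_mul _)).const_mul _) (.of_forall fun x => ?_)
  rw [norm_mul, RCLike.norm_conj]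
  calc ‖a x‖ * ‖c x‖ ≤ ‖a x‖ * (K * (H * ‖b x‖)) := by gcongr; exact hc x
    _ = K * (‖a x‖ * (H * ‖b x‖)) := by ring
    _ ≤ K * (‖a x‖ ^ 2 + H ^ 2 * ‖b x‖ ^ 2) := by
      gcongr
      nlinarith [sq_nonneg (‖a x‖ - H * ‖b x‖), sq_nonneg (‖a x‖), sq_nonneg (H * ‖b x‖)]

lemma per_h (m : ℕ) (hm : 1 ≤ m) (u : 𝓢(ℝ, ℂ)) (hu : ∀ x, conj (u x) = u x) (M : ℝ)
    (hM : ∀ x, ‖dv u x‖ ≤ M) (h : ℂ) :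
    |(∫ x, conj ((Df 1 h ^ (2 * m)) u x) * (Df 1 h ^ (2 * m)) (pr u (dv u)) x).re| ≤
      ((2 * m + 1 : ℕ) * 16 ^ (2 * m)) * M * Qf m u h := by
  have hM0 : 0 ≤ M := (norm_nonneg _).trans (hM 0)
  set k := 2 * m with hk
  have hn1 := n2_nonneg ((Df 1 h ^ m) u)
  have hn2 := n2_nonneg ((Df 1 h ^ m) (dv u))
  have hn3 := n2_nonneg ((Df 0 h ^ m) u)
  have hn2' : 0 ≤ ‖h‖ ^ 2 * n2 ((Df 1 h ^ m) (dv u)) := by positivity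
  have hQ : 0 ≤ Qf m u h := by unfold Qf; positivity
  have ha : n2 ((Df 1 h ^ k) u) ≤ 4 ^ k * n2 ((Df 1 h ^ m) u) :=
    n2_Df_le _ _ _ _ _ _ (by omega) le_rfl
  let G : ℕ → 𝓢(ℝ, ℂ) := fun j =>
    pr (cj ((Df 1 h ^ k) u)) (pr ((Df 0 h ^ j) u) ((Sh 1 h ^ j) ((Df 1 h ^ (k - j)) (dv u))))
  have hsum : ∫ x, conj ((Df 1 h ^ k) u x) * (Df 1 h ^ k) (pr u (dv u)) x =
      ∑ j ∈ Finset.range (k + 1), (k.choose j : ℂ) * ∫ x, G j x := by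
    simp_rw [← integral_const_mul]
    rw [← integral_finsetSum]
    · congr 1; ext x
      rw [leibniz, Finset.mul_sum]
      refine Finset.sum_congr rfl fun j _ => ?_
      simp only [G, pr_apply, cj_apply]; ring
    · intro j _; exact (G j).integrable.const_mul _
  have hterm : ∀ j ∈ Finset.range (k + 1), |((k.choose j : ℂ) * ∫ x, G j x).re| ≤
      16 ^ k * M * Qf m u h := by
    intro j hj
    have hjk : j ≤ k := by simpa [Nat.lt_succ_iff] using hj
    have hre : ((k.choose j : ℂ) * ∫ x, G j x).re = (k.choose j : ℝ) * (∫ x, G j x).re := by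
      simp
    have hch : (k.choose j : ℝ) ≤ 2 ^ k := by exact_mod_cast Nat.choose_le_two_pow k j
    suffices hs : |(∫ x, G j x).re| ≤ 2 ^ k * M * (4 ^ k * Qf m u h) by
      rw [hre, abs_mul, abs_of_nonneg (by positivity : (0 : ℝ) ≤ k.choose j)]
      calc (k.choose j : ℝ) * |(∫ x, G j x).re| ≤ 2 ^ k * (2 ^ k * M * (4 ^ k * Qf m u h)) := by
            gcongr
        _ = (2 * 2 * 4) ^ k * M * Qf m u h := by rw [mul_pow, mul_pow]; ring
        _ = (16 : ℝ) ^ k * M * Qf m u h := by norm_num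
    have hGe : ∫ x, G j x = ∫ x, conj ((Df 1 h ^ k) u x) * ((Df 0 h ^ j) u x *
        (Sh 1 h ^ j) ((Df 1 h ^ (k - j)) (dv u)) x) := by
      congr 1
    rw [hGe]
    rcases Nat.eq_zero_or_pos j with rfl | hj0
    · have := ibp u ((Df 1 h ^ k) u) hu M hM
      simp only [dv_Df_pow] at this
      simp only [pow_zero, Module.End.one_apply, Nat.sub_zero]
      refine this.trans ?_
      have h1 : (1 : ℝ) ≤ 2 ^ k := one_le_pow₀ (by norm_num)
      calc M * n2 ((Df 1 h ^ k) u) ≤ M * (4 ^ k * Qf m u h) := by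
            gcongr
            refine ha.trans ?_
            gcongr
            unfold Qf; linarith
        _ ≤ 2 ^ k * (M * (4 ^ k * Qf m u h)) := le_mul_of_one_le_left (by positivity) h1
        _ = _ := by ring
    · refine (Complex.abs_re_le_norm _).trans ?_
      rcases lt_or_ge j m with hjm | hjm
      · refine (term_bound _ ((Sh 1 h ^ j) ((Df 1 h ^ (k - j)) (dv u))) _ (2 ^ k * M) ‖h‖
          (by positivity) ?_).trans ?_
        · intro x
          rw [norm_mul]
          obtain ⟨i, rfl⟩ : ∃ i, j = i + 1 := ⟨j - 1, by omega⟩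
          have := Df0_bound h i u M hM x
          calc _ ≤ 2 ^ i * (‖h‖ * M) * ‖(Sh 1 h ^ (i + 1)) ((Df 1 h ^ (k - (i + 1))) (dv u)) x‖ := by
                gcongr
            _ ≤ 2 ^ k * (‖h‖ * M) * ‖(Sh 1 h ^ (i + 1)) ((Df 1 h ^ (k - (i + 1))) (dv u)) x‖ := by
                gcongr
                · norm_num
                · omega
            _ = _ := by ring
        · gcongr
          rw [n2_Sh]
          have := n2_Df_le 1 h m (k - j) k (dv u) (by omega) (by omega)
          calc _ ≤ 4 ^ k * n2 ((Df 1 h ^ m) u) + ‖h‖ ^ 2 * (4 ^ k * n2 ((Df 1 h ^ m) (dv u))) := by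
                gcongr
            _ = 4 ^ k * (n2 ((Df 1 h ^ m) u) + ‖h‖ ^ 2 * n2 ((Df 1 h ^ m) (dv u))) := by ring
            _ ≤ _ := by gcongr; unfold Qf; linarith
      · refine (term_bound _ ((Df 0 h ^ j) u) _ (2 ^ k * M) 1
          (by positivity) ?_).trans ?_
        · intro x
          rw [norm_mul]
          have := Sh_norm 1 h j _ _ (Df_norm 1 h (k - j) (dv u) M hM) x
          calc _ ≤ ‖(Df 0 h ^ j) u x‖ * (2 ^ (k - j) * M) := by gcongr
            _ ≤ ‖(Df 0 h ^ j) u x‖ * (2 ^ k * M) := by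
                gcongr
                · norm_num
                · omega
            _ = _ := by ring
        · gcongr
          have := n2_Df_le 0 h m j k u (by omega) (by omega)
          calc _ ≤ 4 ^ k * n2 ((Df 1 h ^ m) u) + 1 ^ 2 * (4 ^ k * n2 ((Df 0 h ^ m) u)) := by
                gcongr
            _ = 4 ^ k * (n2 ((Df 1 h ^ m) u) + n2 ((Df 0 h ^ m) u)) := by ring
            _ ≤ _ := by gcongr; unfold Qf; linarith
  rw [hsum, Complex.re_sum]
  refine (Finset.abs_sum_le_sum_abs _ _).trans ((Finset.sum_le_sum hterm).trans ?_)
  rw [Finset.sum_const, Finset.card_range, nsmul_eq_mul]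
  apply le_of_eq; ring

open scoped ComplexConjugate

lemma frq_norm_rpow (τ ξ r : ℝ) : ‖frq τ ξ‖ ^ (2 * r) = (τ ^ 2 + ξ ^ 2) ^ r := by
  rw [Real.rpow_mul (norm_nonneg _)]
  congr 1
  rw [Real.rpow_two, Complex.sq_norm, Complex.normSq_mk]
  simp only [frq]; ring

lemma frq_continuous (τ : ℝ) : Continuous (frq τ) := by
  have : frq τ = fun ξ : ℝ => (ξ : ℂ) - τ * Complex.I := by
    ext ξ; apply Complex.ext <;> simp [frq]
  rw [this]; fun_prop

lemma sg_frq_cont (τ : ℝ) : Continuous (fun p : ℂ × ℝ => sg p.1 (frq τ p.2)) := by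
  have := frq_continuous τ
  exact sg_continuous.comp (by fun_prop : Continuous fun p : ℂ × ℝ => (p.1, frq τ p.2))

lemma tonelli {E : Type*} [NormedAddCommGroup E] [NormedSpace ℝ E] [CompleteSpace E]
    (m : ℕ) (r : ℝ) (hr : 0 < r) (C : ℝ)
    (hC : ∀ ζ : ℂ, Integrable (fun h : ℂ => ‖sg h ζ‖ ^ (2 * m) * ‖h‖ ^ (-2 - 2 * r)) ∧
      ∫ h : ℂ, ‖sg h ζ‖ ^ (2 * m) * ‖h‖ ^ (-2 - 2 * r) = C * ‖ζ‖ ^ (2 * r))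
    (τ : ℝ) (hτ : τ ^ 2 ≤ 1) (ψ : ℝ → E) (hψ : AEStronglyMeasurable ψ)
    (hi : Integrable (fun ξ => (1 + ξ ^ 2) ^ r • ψ ξ)) :
    Integrable (fun h : ℂ => ‖h‖ ^ (-2 - 2 * r) • ∫ ξ, ‖sg h (frq τ ξ)‖ ^ (2 * m) • ψ ξ) ∧
    ∫ h : ℂ, ‖h‖ ^ (-2 - 2 * r) • ∫ ξ, ‖sg h (frq τ ξ)‖ ^ (2 * m) • ψ ξ =
      C • ∫ ξ, (τ ^ 2 + ξ ^ 2) ^ r • ψ ξ := by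
  have hi2 : Integrable (fun ξ => (τ ^ 2 + ξ ^ 2) ^ r • ψ ξ) := by
    refine hi.mono ?_ (.of_forall fun ξ => ?_)
    · refine AEStronglyMeasurable.smul ?_ hψ
      exact (by fun_prop : Measurable fun ξ : ℝ => (τ ^ 2 + ξ ^ 2) ^ r).aestronglyMeasurable
    · rw [norm_smul, norm_smul]
      gcongr
      rw [Real.norm_of_nonneg (by positivity), Real.norm_of_nonneg (by positivity)]
      gcongr
  let F : ℂ → ℝ → E := fun h ξ => (‖sg h (frq τ ξ)‖ ^ (2 * m) * ‖h‖ ^ (-2 - 2 * r)) • ψ ξ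
  have hF : Integrable (Function.uncurry F) ((volume : Measure ℂ).prod (volume : Measure ℝ)) := by
    rw [integrable_prod_iff']
    · refine ⟨.of_forall fun ξ => ?_, ?_⟩
      · exact (hC (frq τ ξ)).1.smul_const (ψ ξ)
      · have : ∀ ξ, ∫ h, ‖Function.uncurry F (h, ξ)‖ = C * ‖(τ ^ 2 + ξ ^ 2) ^ r • ψ ξ‖ := by
          intro ξ
          simp only [Function.uncurry, F, norm_smul]
          rw [integral_mul_const, Real.norm_of_nonneg (by positivity : 0 ≤ (τ ^ 2 + ξ ^ 2) ^ r),
            ← mul_assoc, ← frq_norm_rpow, ← (hC (frq τ ξ)).2]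
          congr 2
          ext h
          rw [Real.norm_of_nonneg (by positivity)]
        simp_rw [this]
        exact hi2.norm.const_mul _
    · refine AEStronglyMeasurable.smul ?_ hψ.comp_snd
      have := (sg_frq_cont τ).measurable
      refine Measurable.aestronglyMeasurable ?_
      fun_prop
  have e : ∀ h, ‖h‖ ^ (-2 - 2 * r) • ∫ ξ, ‖sg h (frq τ ξ)‖ ^ (2 * m) • ψ ξ = ∫ ξ, F h ξ := by
    intro h
    rw [← integral_smul]
    congr 1; ext ξ
    simp only [F, smul_smul]
    rw [mul_comm]
  simp_rw [e]
  refine ⟨hF.integral_prod_left, ?_⟩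
  rw [integral_integral_swap hF, ← integral_smul]
  congr 1; ext ξ
  simp only [F]
  rw [integral_smul_const, (hC _).2, frq_norm_rpow, smul_smul]

lemma wt_temp (r : ℝ) : (fun ξ : ℝ => (1 + ξ ^ 2) ^ r).HasTemperateGrowth := by
  have := Function.hasTemperateGrowth_one_add_norm_sq_rpow ℝ r
  simpa using this

/-- multiplication by the weight -/
def wt (r : ℝ) (f : 𝓢(ℝ, ℂ)) : 𝓢(ℝ, ℂ) := smulLeftCLM ℂ (fun ξ : ℝ => (1 + ξ ^ 2) ^ r) f

lemma wt_apply (r : ℝ) (f : 𝓢(ℝ, ℂ)) (ξ : ℝ) : wt r f ξ = ((1 + ξ ^ 2) ^ r : ℝ) • f ξ := by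
  rw [wt, smulLeftCLM_apply_apply (wt_temp r)]

lemma dv_fourier (u : 𝓢(ℝ, ℂ)) (ξ : ℝ) :
    𝓕 (dv u) ξ = (2 * Real.pi * Complex.I * ξ) * 𝓕 u ξ := by
  have := Real.fourier_deriv (f := u) u.integrable u.differentiable (dv u).integrable
  have h2 := congrFun this ξ
  rw [smul_eq_mul] at h2
  exact h2

lemma wt_sq_integrable (r : ℝ) (f : 𝓢(ℝ, ℂ)) :
    Integrable (fun ξ => (1 + ξ ^ 2) ^ r • ‖f ξ‖ ^ 2) := by
  have := (pr (wt r f) (cj f)).integrable (μ := volume)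
  refine this.norm.congr (.of_forall fun ξ => ?_)
  simp only [pr_apply, cj_apply, wt_apply, norm_mul, norm_smul, RCLike.norm_conj, smul_eq_mul]
  rw [Real.norm_of_nonneg (by positivity)]; ring

def En (s : ℝ) (u : 𝓢(ℝ, ℂ)) : ℝ := ∫ ξ, (1 + ξ ^ 2) ^ s * ‖𝓕 u ξ‖ ^ 2

lemma trilinear (s : ℝ) (hs : 1 < s) : ∃ C : ℝ, 0 < C ∧ ∀ u : 𝓢(ℝ, ℂ), (∀ x, conj (u x) = u x) →
    ∀ M : ℝ, (∀ x, ‖dv u x‖ ≤ M) →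
    |(∫ ξ, conj ((((1 + ξ ^ 2) ^ s : ℝ) : ℂ) * 𝓕 u ξ) * 𝓕 (pr u (dv u)) ξ).re| ≤ C * M * En s u := by
  obtain ⟨m, hm⟩ := exists_nat_gt s
  have hm1 : 1 ≤ m := by
    have : (1 : ℝ) < m := hs.trans hm
    exact_mod_cast this.le
  obtain ⟨C0, hC0, h0⟩ := kernel (2 * m) s (by linarith) (by push_cast; linarith)
  obtain ⟨C1, hC1, h1⟩ := kernel m s (by linarith) hm
  obtain ⟨C2, hC2, h2⟩ := kernel m (s - 1) (by linarith) (by linarith)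
  set K : ℝ := ((2 * m + 1 : ℕ) * 16 ^ (2 * m)) with hK
  have hKpos : 0 < K := by rw [hK]; positivity
  refine ⟨C0⁻¹ * (K * (C1 + C2 * (4 * Real.pi ^ 2) + C1)), by positivity, fun u hu M hM => ?_⟩
  have hM0 : 0 ≤ M := (norm_nonneg _).trans (hM 0)
  have hE0 : 0 ≤ En s u := integral_nonneg fun ξ => by positivity
  -- the three pieces of Q
  have q1 := tonelli m s (by linarith) C1 h1 1 (by norm_num) (fun ξ => ‖𝓕 u ξ‖ ^ 2)
    (by exact ((𝓕 u).continuous.norm.pow 2).aestronglyMeasurable) (wt_sq_integrable s (𝓕 u))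
  have q3 := tonelli m s (by linarith) C1 h1 0 (by norm_num) (fun ξ => ‖𝓕 u ξ‖ ^ 2)
    (by exact ((𝓕 u).continuous.norm.pow 2).aestronglyMeasurable) (wt_sq_integrable s (𝓕 u))
  have q2 := tonelli m (s - 1) (by linarith) C2 h2 1 (by norm_num) (fun ξ => ‖𝓕 (dv u) ξ‖ ^ 2)
    (by exact ((𝓕 (dv u)).continuous.norm.pow 2).aestronglyMeasurable)
    (wt_sq_integrable (s - 1) (𝓕 (dv u)))
  simp only [smul_eq_mul, ← n2_Df] at q1 q2 q3
  have hQe : (fun h : ℂ => ‖h‖ ^ (-2 - 2 * s) * Qf m u h) = fun h =>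
      ‖h‖ ^ (-2 - 2 * s) * n2 ((Df 1 h ^ m) u) +
      ‖h‖ ^ (-2 - 2 * (s - 1)) * n2 ((Df 1 h ^ m) (dv u)) +
      ‖h‖ ^ (-2 - 2 * s) * n2 ((Df 0 h ^ m) u) := by
    ext h
    have : ‖h‖ ^ (-2 - 2 * (s - 1)) = ‖h‖ ^ (-2 - 2 * s) * ‖h‖ ^ 2 := by
      rcases eq_or_ne h 0 with rfl | hh
      · have : -2 - 2 * (s - 1) ≠ 0 := by linarith
        simp [Real.zero_rpow this]
      · rw [← Real.rpow_two, ← Real.rpow_add (norm_pos_iff.2 hh)]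
        congr 1; ring
    rw [this, Qf]; ring
  have hQi : Integrable (fun h : ℂ => ‖h‖ ^ (-2 - 2 * s) * Qf m u h) := by
    rw [hQe]; exact (q1.1.add q2.1).add q3.1
  have hQle : ∫ h : ℂ, ‖h‖ ^ (-2 - 2 * s) * Qf m u h ≤
      (C1 + C2 * (4 * Real.pi ^ 2) + C1) * En s u := by
    rw [hQe, integral_add (by exact q1.1.add q2.1) q3.1, integral_add q1.1 q2.1, q1.2, q2.2, q3.2]
    have e1 : ∫ ξ, ((1 : ℝ) ^ 2 + ξ ^ 2) ^ s * ‖𝓕 u ξ‖ ^ 2 = En s u := by simp [En]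
    have e3 : ∫ ξ, ((0 : ℝ) ^ 2 + ξ ^ 2) ^ s * ‖𝓕 u ξ‖ ^ 2 ≤ En s u := by
      refine integral_mono_of_nonneg (.of_forall fun ξ => by positivity)
        (wt_sq_integrable s (𝓕 u)) (.of_forall fun ξ => ?_)
      dsimp only
      gcongr
      norm_num
    have e2 : ∫ ξ, ((1 : ℝ) ^ 2 + ξ ^ 2) ^ (s - 1) * ‖𝓕 (dv u) ξ‖ ^ 2 ≤
        (4 * Real.pi ^ 2) * En s u := by
      rw [En, ← integral_const_mul]
      refine integral_mono_of_nonneg (.of_forall fun ξ => by positivity)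
        ((wt_sq_integrable s (𝓕 u)).const_mul _) (.of_forall fun ξ => ?_)
      dsimp only
      rw [dv_fourier]
      have hpos : 0 < 1 + ξ ^ 2 := by positivity
      have : (1 + ξ ^ 2) ^ s = (1 + ξ ^ 2) ^ (s - 1) * (1 + ξ ^ 2) := by
        rw [← Real.rpow_add_one hpos.ne']; congr 1; ring
      rw [this]
      simp only [norm_mul, Complex.norm_I, Complex.norm_real, Complex.norm_ofNat, mul_one,
        Real.norm_eq_abs, abs_of_pos Real.pi_pos, mul_pow, sq_abs, one_pow]
      have : 0 ≤ (1 + ξ ^ 2) ^ (s - 1) * Real.pi ^ 2 * ‖𝓕 u ξ‖ ^ 2 := by positivity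
      nlinarith
    rw [e1]
    nlinarith [mul_le_mul_of_nonneg_left e2 hC2.le, mul_le_mul_of_nonneg_left e3 hC1.le]
  -- main
  let Φ : 𝓢(ℝ, ℂ) := pr (cj (𝓕 u)) (𝓕 (pr u (dv u)))
  have hΦi : Integrable (fun ξ => (1 + ξ ^ 2) ^ s • Φ ξ) := by
    refine ((wt s Φ).integrable (μ := volume)).congr (.of_forall fun ξ => ?_)
    rw [wt_apply]
  have qm := tonelli (2 * m) s (by linarith) C0 h0 1 (by norm_num) Φ
    Φ.continuous.aestronglyMeasurable hΦi
  have hin : ∀ h : ℂ, ∫ ξ, ‖sg h (frq 1 ξ)‖ ^ (2 * (2 * m)) • Φ ξ =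
      ∫ x, conj ((Df 1 h ^ (2 * m)) u x) * (Df 1 h ^ (2 * m)) (pr u (dv u)) x := by
    intro h
    have := integral_sesq_fourier_fourier ((Df 1 h ^ (2 * m)) u) ((Df 1 h ^ (2 * m)) (pr u (dv u)))
      (innerSL ℂ)
    simp only [innerSL_apply_apply, RCLike.inner_apply'] at this
    rw [← this]
    congr 1; ext ξ
    rw [Df_pow_fourier, Df_pow_fourier]
    simp only [Φ, pr_apply, cj_apply, map_mul, map_pow, Complex.real_smul]
    have : ((‖sg h (frq 1 ξ)‖ ^ (2 * (2 * m)) : ℝ) : ℂ) =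
        conj (sg h (frq 1 ξ)) ^ (2 * m) * sg h (frq 1 ξ) ^ (2 * m) := by
      rw [← mul_pow, Complex.conj_mul', pow_mul]; push_cast; rfl
    rw [this]; ring
  simp_rw [hin] at qm
  have hlhs : ∫ ξ, conj ((((1 + ξ ^ 2) ^ s : ℝ) : ℂ) * 𝓕 u ξ) * 𝓕 (pr u (dv u)) ξ =
      ∫ ξ, ((1 : ℝ) ^ 2 + ξ ^ 2) ^ s • Φ ξ := by
    congr 1; ext ξ
    simp only [Φ, pr_apply, cj_apply, map_mul, Complex.conj_ofReal, Complex.real_smul, one_pow]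
    ring
  rw [hlhs]
  have hre : C0 * (∫ ξ, ((1 : ℝ) ^ 2 + ξ ^ 2) ^ s • Φ ξ).re = ∫ h : ℂ, ‖h‖ ^ (-2 - 2 * s) *
      (∫ x, conj ((Df 1 h ^ (2 * m)) u x) * (Df 1 h ^ (2 * m)) (pr u (dv u)) x).re := by
    have := congrArg Complex.re qm.2
    rw [Complex.smul_re, smul_eq_mul] at this
    rw [← this]
    have h3 := integral_re qm.1
    simp only [RCLike.re_to_complex, Complex.smul_re, smul_eq_mul] at h3
    exact h3.symm
  have hfin : C0 * |(∫ ξ, ((1 : ℝ) ^ 2 + ξ ^ 2) ^ s • Φ ξ).re| ≤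
      K * M * ((C1 + C2 * (4 * Real.pi ^ 2) + C1) * En s u) := by
    rw [← abs_of_pos hC0, ← abs_mul, hre, ← Real.norm_eq_abs]
    refine (norm_integral_le_of_norm_le (hQi.const_mul (K * M)) (.of_forall fun h => ?_)).trans ?_
    · rw [norm_mul, Real.norm_of_nonneg (by positivity), Real.norm_eq_abs]
      have := per_h m hm1 u hu M hM h
      calc _ ≤ ‖h‖ ^ (-2 - 2 * s) * (K * M * Qf m u h) := by gcongr
        _ = _ := by ring
    · rw [integral_const_mul]
      gcongr
  rw [← mul_le_mul_iff_right₀ hC0]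
  refine hfin.trans (le_of_eq ?_)
  field_simp

open scoped ComplexConjugate

lemma tanh_le_id {y : ℝ} (hy : 0 ≤ y) : Real.tanh y ≤ y := by
  have hmono : MonotoneOn (fun y : ℝ => y * Real.cosh y - Real.sinh y) (Set.Ici 0) := by
    refine monotoneOn_of_hasDerivWithinAt_nonneg (f' := fun y => y * Real.sinh y)
      (convex_Ici 0) ?_ ?_ ?_
    · exact (by fun_prop : Continuous fun y : ℝ => y * Real.cosh y - Real.sinh y).continuousOn
    · intro x hx
      have := ((hasDerivAt_id x).mul (Real.hasDerivAt_cosh x)).sub (Real.hasDerivAt_sinh x)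
      refine (this.congr_deriv ?_).hasDerivWithinAt
      simp
    · intro x hx
      rw [interior_Ici] at hx
      exact mul_nonneg (le_of_lt hx) (Real.sinh_nonneg_iff.2 (le_of_lt hx))
  have := hmono (Set.mem_Ici.2 le_rfl) (Set.mem_Ici.2 hy) hy
  simp only [zero_mul, Real.sinh_zero, sub_zero] at this
  rw [Real.tanh_eq_sinh_div_cosh, div_le_iff₀ (Real.cosh_pos y)]
  linarith

lemma Tsymb_le (μ ξ : ℝ) : Tsymb μ ξ ≤ 1 := by
  unfold Tsymb
  split_ifs
  · exact le_rfl
  · exact div_le_one_of_le₀ (tanh_le_id (by positivity)) (by positivity)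

lemma Tsymb_measurable (μ : ℝ) : Measurable (Tsymb μ) := by
  unfold Tsymb
  refine Measurable.ite (measurableSet_singleton 0) measurable_const ?_
  have : Measurable Real.tanh := by
    have e : Real.tanh = fun x => Real.sinh x / Real.cosh x := by
      ext x; exact Real.tanh_eq_sinh_div_cosh x
    rw [e]; fun_prop
  fun_prop

lemma mult_norm_le (μ ξ : ℝ) (z : ℂ) : ‖((Real.sqrt (Tsymb μ ξ) : ℝ) : ℂ) * z‖ ≤ ‖z‖ := by
  rw [norm_mul, Complex.norm_real, Real.norm_of_nonneg (Real.sqrt_nonneg _)]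
  have : Real.sqrt (Tsymb μ ξ) ≤ 1 := Real.sqrt_le_one.2 (Tsymb_le μ ξ)
  exact mul_le_of_le_one_left (norm_nonneg _) this

lemma mult_integrable (μ : ℝ) (f : 𝓢(ℝ, ℂ)) :
    Integrable (fun ξ : ℝ => ((Real.sqrt (Tsymb μ ξ) : ℝ) : ℂ) * f ξ) := by
  refine f.integrable.mono ?_ (.of_forall fun ξ => mult_norm_le μ ξ _)
  have := Tsymb_measurable μ
  have h2 := f.continuous.measurable
  exact (by fun_prop : Measurable (fun ξ : ℝ => ((Real.sqrt (Tsymb μ ξ) : ℝ) : ℂ) * f ξ)).aestronglyMeasurable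

/-- complexification -/
def cx (f : 𝓢(ℝ, ℝ)) : 𝓢(ℝ, ℂ) := postcompCLM (𝕜 := ℝ) Complex.ofRealCLM f

lemma cx_apply (f : 𝓢(ℝ, ℝ)) (x : ℝ) : cx f x = (f x : ℂ) := by simp [cx]

lemma cc_eq (f : 𝓢(ℝ, ℝ)) : cc f = cx f := by ext x; simp [cc, cx_apply]

lemma dv_cx (f : 𝓢(ℝ, ℝ)) (x : ℝ) : dv (cx f) x = ((deriv f x : ℝ) : ℂ) := by
  rw [derivCLM_apply]
  have : (cx f : ℝ → ℂ) = fun x => (f x : ℂ) := by ext x; exact cx_apply f x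
  rw [this]
  exact (f.hasDerivAt x).ofReal_comp.deriv

lemma cc_deriv (f : 𝓢(ℝ, ℝ)) : cc (deriv f) = dv (cx f) := by
  ext x; rw [dv_cx]; rfl

lemma sq_deriv (f : 𝓢(ℝ, ℝ)) (x : ℝ) : deriv (fun y => (f y) ^ 2) x = 2 * f x * deriv f x := by
  have := (f.hasDerivAt x).pow 2
  have h := this.deriv
  simp only [Nat.cast_ofNat, Nat.add_one_sub_one, pow_one] at h
  exact h

lemma sqrtT_eq (μ : ℝ) (f : 𝓢(ℝ, ℂ)) : sqrtTmul μ f =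
    𝓕⁻ (fun ξ : ℝ => ((Real.sqrt (Tsymb μ ξ) : ℝ) : ℂ) * 𝓕 f ξ) := rfl

lemma sqrtT_bound (μ : ℝ) (f : 𝓢(ℝ, ℂ)) (x : ℝ) : ‖sqrtTmul μ f x‖ ≤ ‖(𝓕 f).toLp 1 volume‖ := by
  rw [sqrtT_eq, norm_toLp_one, Real.fourierInv_eq]
  refine norm_integral_le_of_norm_le (𝓕 f).integrable.norm (.of_forall fun ξ => ?_)
  rw [Circle.norm_smul]
  exact mult_norm_le μ ξ _

lemma sqrtT_cont (μ : ℝ) (f : 𝓢(ℝ, ℂ)) : Continuous (sqrtTmul μ f) := by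
  rw [sqrtT_eq]
  exact VectorFourier.fourierIntegral_continuous (L := -innerₗ ℝ) Real.continuous_fourierChar
    (by simp only [LinearMap.neg_apply, innerₗ_apply_apply]; fun_prop) (mult_integrable μ (𝓕 f))

lemma disp_zero (s μ : ℝ) (u G : 𝓢(ℝ, ℂ)) (hG : 𝓕 G = wt s (𝓕 u)) :
    (∫ x, conj (G x) * sqrtTmul μ (dv u) x).re = 0 := by
  have key := VectorFourier.integral_sesq_fourierIntegral_eq_neg_flip (innerSL ℂ (E := ℂ))
    (L := innerₗ ℝ) Real.continuous_fourierChar continuous_inner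
    (G.integrable (μ := volume)) (mult_integrable μ (𝓕 (dv u)))
  have e1 : ∫ x, conj (G x) * sqrtTmul μ (dv u) x =
     ∫ ξ, conj (𝓕 G ξ) * (((Real.sqrt (Tsymb μ ξ) : ℝ) : ℂ) * 𝓕 (dv u) ξ) := by
    simp only [innerSL_apply_apply, RCLike.inner_apply'] at key
    have f1 : (-(innerₗ ℝ).flip : ℝ →ₗ[ℝ] ℝ →ₗ[ℝ] ℝ) = -innerₗ ℝ := by
      ext; simp
    rw [f1] at key
    exact key.symm
  rw [e1]
  have e2 : ∀ ξ, conj (𝓕 G ξ) * (((Real.sqrt (Tsymb μ ξ) : ℝ) : ℂ) * 𝓕 (dv u) ξ) =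
      ((((1 + ξ ^ 2) ^ s * Real.sqrt (Tsymb μ ξ) * (2 * Real.pi * ξ) * ‖𝓕 u ξ‖ ^ 2 : ℝ)) : ℂ)
        * Complex.I := by
    intro ξ
    rw [hG, wt_apply, dv_fourier, Complex.real_smul, map_mul, Complex.conj_ofReal]
    push_cast
    rw [← Complex.conj_mul']
    ring
  simp_rw [e2]
  rw [integral_mul_const, integral_complex_ofReal, Complex.re_ofReal_mul, Complex.I_re, mul_zero]

lemma HsNorm_eq (s : ℝ) (f : 𝓢(ℝ, ℝ)) : ((HsNorm s (cc f)).toReal) ^ 2 = En s (cx f) := by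
  have hj : ∀ ξ, (jap ξ ^ s) ^ 2 = (1 + ξ ^ 2) ^ s := by
    intro ξ
    rw [jap, ← Real.rpow_mul (by positivity), ← Real.rpow_two, ← Real.rpow_mul (by positivity)]
    congr 1; ring
  have hjc : Continuous fun ξ => jap ξ ^ s := by
    unfold jap
    refine Continuous.rpow_const (Continuous.rpow_const (by fun_prop) fun ξ => ?_) fun ξ => ?_ <;>
      left <;> positivity
  rw [HsNorm, cc_eq]
  have hi := wt_sq_integrable s (𝓕 (cx f))
  have hsq : ∀ ξ, (jap ξ ^ s * ‖𝓕 (cx f) ξ‖) ^ 2 = (1 + ξ ^ 2) ^ s * ‖𝓕 (cx f) ξ‖ ^ 2 := by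
    intro ξ; rw [mul_pow, hj]
  have hm : MemLp (fun ξ => jap ξ ^ s * ‖𝓕 (cx f) ξ‖) 2 volume := by
    rw [memLp_two_iff_integrable_sq]
    · simp_rw [hsq]; exact hi
    · exact (hjc.mul (𝓕 (cx f)).continuous.norm).aestronglyMeasurable
  have h2 := hm.eLpNorm_eq_integral_rpow_norm (by norm_num) (by norm_num)
  have : eLpNorm (fun ξ => jap ξ ^ s * ‖𝓕 (cx f : ℝ → ℂ) ξ‖) 2 volume =
    eLpNorm (fun ξ => jap ξ ^ s * ‖𝓕 (cx f) ξ‖) 2 volume := rfl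
  rw [this, h2, ENNReal.toReal_ofReal (by positivity)]
  simp only [ENNReal.toReal_ofNat, Real.rpow_two, Real.norm_eq_abs, sq_abs, hsq]
  rw [← Real.rpow_two, ← Real.rpow_mul (integral_nonneg fun ξ => by positivity)]
  norm_num
  rfl

lemma linf_bound (f : 𝓢(ℝ, ℝ)) (x : ℝ) :
    ‖dv (cx f) x‖ ≤ (eLpNorm (deriv f) ⊤ volume).toReal := by
  let g : 𝓢(ℝ, ℝ) := derivCLM ℝ ℝ f
  have hg : (g : ℝ → ℝ) = deriv f := by ext x; exact derivCLM_apply ..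
  rw [← hg, dv_cx, ← hg, Complex.norm_real]
  have hfin := (g.memLp_top volume).eLpNorm_ne_top
  have hae : ∀ᵐ x, ‖g x‖ ≤ (eLpNorm g ⊤ volume).toReal := by
    filter_upwards [ae_le_eLpNormEssSup (f := g) (μ := volume)] with x hx
    rw [← eLpNorm_exponent_top] at hx
    have := ENNReal.toReal_mono hfin hx
    simpa using this
  have hc : IsClosed {x | ‖g x‖ ≤ (eLpNorm g ⊤ volume).toReal} :=
    isClosed_le g.continuous.norm continuous_const
  have hd : Dense {x | ‖g x‖ ≤ (eLpNorm g ⊤ volume).toReal} := Measure.dense_of_ae hae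
  have h3 := hd x
  rw [hc.closure_eq] at h3
  exact h3

open scoped ComplexConjugate Topology

lemma planch (a b : 𝓢(ℝ, ℂ)) : ∫ x, conj (a x) * b x = ∫ ξ, conj (𝓕 a ξ) * 𝓕 b ξ := by
  have := integral_sesq_fourier_fourier a b (innerSL ℂ)
  simp only [innerSL_apply_apply, RCLike.inner_apply'] at this
  exact this.symm

lemma en_min (s : ℝ) (u v G : 𝓢(ℝ, ℂ)) (hG : 𝓕 G = wt s (𝓕 u)) :
    En s u - 2 * (∫ x, conj (G x) * u x).re ≤ En s v - 2 * (∫ x, conj (G x) * v x).re := by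
  have e : ∀ v : 𝓢(ℝ, ℂ), Integrable (fun ξ => (1 + ξ ^ 2) ^ s * ‖𝓕 v ξ‖ ^ 2 -
      2 * (conj (𝓕 G ξ) * 𝓕 v ξ).re) ∧ En s v - 2 * (∫ x, conj (G x) * v x).re =
      ∫ ξ, ((1 + ξ ^ 2) ^ s * ‖𝓕 v ξ‖ ^ 2 - 2 * (conj (𝓕 G ξ) * 𝓕 v ξ).re) := by
    intro v
    have h1 : Integrable (fun ξ => (1 + ξ ^ 2) ^ s * ‖𝓕 v ξ‖ ^ 2) := wt_sq_integrable s (𝓕 v)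
    have h2 : Integrable (fun ξ => conj (𝓕 G ξ) * 𝓕 v ξ) := by
      refine ((pr (cj (𝓕 G)) (𝓕 v)).integrable (μ := volume)).congr (.of_forall fun ξ => ?_)
      simp only [pr_apply, cj_apply]
    have h3 : Integrable (fun ξ => (conj (𝓕 G ξ) * 𝓕 v ξ).re) := h2.re
    refine ⟨h1.sub (h3.const_mul 2), ?_⟩
    rw [integral_sub h1 (h3.const_mul 2), integral_const_mul, planch]
    have h4 := integral_re h2
    simp only [RCLike.re_to_complex] at h4
    rw [h4, En]
  rw [(e u).2, (e v).2]
  refine integral_mono (e u).1 (e v).1 fun ξ => ?_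
  dsimp only
  rw [hG, wt_apply, Complex.real_smul, map_mul, Complex.conj_ofReal, mul_assoc, mul_assoc,
    Complex.re_ofReal_mul, Complex.re_ofReal_mul]
  have hw : 0 ≤ (1 + ξ ^ 2) ^ s := by positivity
  simp only [Complex.sq_norm, Complex.normSq_apply, Complex.mul_re, Complex.conj_re,
    Complex.conj_im]
  nlinarith [mul_nonneg hw (add_nonneg (sq_nonneg ((𝓕 u ξ).re - (𝓕 v ξ).re))
    (sq_nonneg ((𝓕 u ξ).im - (𝓕 v ξ).im)))]

/-- right-hand side -/
def Rh (ε μ : ℝ) (f : 𝓢(ℝ, ℝ)) (x : ℝ) : ℂ :=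
  sqrtTmul μ (dv (cx f)) x + (ε : ℂ) * pr (cx f) (dv (cx f)) x

lemma Rh_eq (ε μ : ℝ) (f : 𝓢(ℝ, ℝ)) (x : ℝ) :
    sqrtTmul μ (cc (deriv f)) x + (ε / 2 : ℂ) * ((deriv (fun y => (f y) ^ 2) x : ℝ) : ℂ) =
      Rh ε μ f x := by
  rw [Rh, cc_deriv, sq_deriv, pr_apply, dv_cx, cx_apply]
  push_cast; ring

lemma Rh_cont (ε μ : ℝ) (f : 𝓢(ℝ, ℝ)) : Continuous (Rh ε μ f) := by
  unfold Rh
  exact (sqrtT_cont μ _).add (continuous_const.mul (pr _ _).continuous)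

lemma cx_cont : Continuous cx := (postcompCLM (𝕜 := ℝ) Complex.ofRealCLM).continuous

lemma Rh_bound (ε μ : ℝ) : ∃ b : 𝓢(ℝ, ℝ) → ℝ, Continuous b ∧ ∀ f x, ‖Rh ε μ f x‖ ≤ b f := by
  have hd : Continuous fun f : 𝓢(ℝ, ℝ) => dv (cx f) := (derivCLM ℂ ℂ).continuous.comp cx_cont
  have hF : Continuous fun f : 𝓢(ℝ, ℝ) => 𝓕 (dv (cx f)) :=
    (FourierTransform.fourierCLM ℂ 𝓢(ℝ, ℂ)).continuous.comp hd
  let N : 𝓢(ℝ, ℂ) → ℝ := fun f => ‖toBoundedContinuousFunctionCLM ℂ ℝ ℂ f‖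
  have hN : Continuous N := (toBoundedContinuousFunctionCLM ℂ ℝ ℂ).continuous.norm
  have hNb : ∀ (f : 𝓢(ℝ, ℂ)) x, ‖f x‖ ≤ N f := fun f x =>
    (toBoundedContinuousFunctionCLM ℂ ℝ ℂ f).norm_coe_le_norm x
  refine ⟨fun f => ‖(𝓕 (dv (cx f))).toLp 1 volume‖ + |ε| * (N (cx f) * N (dv (cx f))), ?_, ?_⟩
  · refine Continuous.add ?_ ?_
    · exact (continuous_toLp.comp hF).norm
    · exact continuous_const.mul ((hN.comp cx_cont).mul (hN.comp hd))
  · intro f x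
    rw [Rh]
    refine (norm_add_le _ _).trans (add_le_add (sqrtT_bound _ _ _) ?_)
    rw [pr_apply, norm_mul, norm_mul, Complex.norm_real, Real.norm_eq_abs]
    gcongr
    · exact hNb _ _
    · exact hNb _ _

theorem main_est (s : ℝ) (hs : 3 / 2 < s) :
    ∃ c : ℝ, 0 < c ∧
      ∀ ε μ : ℝ, 0 < ε → ε ≤ 1 → 0 < μ → μ ≤ 1 →
        ∀ T : ℝ, 0 < T →
          ∀ η : ℝ → 𝓢(ℝ, ℝ), Continuous η →
            (∀ t ∈ Set.Icc (0 : ℝ) T, ∀ x : ℝ,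
              HasDerivAt (fun τ => ((η τ x : ℝ) : ℂ))
                (-(sqrtTmul μ (cc (deriv (⇑(η t)))) x +
                    (ε / 2 : ℂ) * ((deriv (fun y => (η t y) ^ 2) x : ℝ) : ℂ))) t) →
            ∀ t ∈ Set.Ioo (0 : ℝ) T, ∀ E' : ℝ,
              HasDerivAt (fun τ => ((HsNorm s (cc ⇑(η τ))).toReal) ^ 2) E' t →
                E' ≤ c * ε * (eLpNorm (deriv (⇑(η t))) ⊤ volume).toReal *
                      ((HsNorm s (cc ⇑(η t))).toReal) ^ 2 := by
  obtain ⟨C, hC, htri⟩ := trilinear s (by linarith)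
  refine ⟨2 * C, by positivity, ?_⟩
  intro ε μ hε _ _ _ T _ η hη heq t ht E' hE'
  simp_rw [HsNorm_eq] at hE' ⊢
  simp_rw [Rh_eq] at heq
  set M := (eLpNorm (deriv (⇑(η t))) ⊤ volume).toReal with hM
  let U := cx (η t)
  let G : 𝓢(ℝ, ℂ) := 𝓕⁻ (wt s (𝓕 U))
  have hG : 𝓕 G = wt s (𝓕 U) := FourierTransform.fourier_fourierInv_eq _
  obtain ⟨b, hb, hbd⟩ := Rh_bound ε μ
  have hnear : ∀ᶠ τ in 𝓝 t, b (η τ) < b (η t) + 1 :=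
    (hb.comp hη).continuousAt.eventually_lt continuousAt_const (by simp)
  have hS : {τ | τ ∈ Set.Ioo (0 : ℝ) T ∧ b (η τ) < b (η t) + 1} ∈ 𝓝 t :=
    Filter.Eventually.and (isOpen_Ioo.mem_nhds ht) hnear
  have hIntg : ∀ v : 𝓢(ℝ, ℂ), Integrable (fun x => conj (G x) * v x) := by
    intro v
    refine ((pr (cj G) v).integrable (μ := volume)).congr (.of_forall fun ξ => ?_)
    simp only [pr_apply, cj_apply]
  have hGc : Continuous fun x => conj (G x) := Complex.continuous_conj.comp G.continuous
  have hder := hasDerivAt_integral_of_dominated_loc_of_deriv_le (μ := volume)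
    (F := fun τ x => conj (G x) * cx (η τ) x)
    (F' := fun τ x => conj (G x) * (-Rh ε μ (η τ) x))
    (bound := fun x => ‖G x‖ * (b (η t) + 1)) hS
    (.of_forall fun τ => (hIntg _).aestronglyMeasurable) (hIntg _)
    (hGc.mul (Rh_cont ε μ _).neg).aestronglyMeasurable
    (.of_forall fun x τ hτ => by
      rw [norm_mul, RCLike.norm_conj, norm_neg]
      gcongr
      exact (hbd _ _).trans hτ.2.le)
    (G.integrable.norm.mul_const _)
    (.of_forall fun x τ hτ => by
      have := heq τ ⟨hτ.1.1.le, hτ.1.2.le⟩ x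
      simp_rw [← cx_apply] at this
      exact this.const_mul _)
  obtain ⟨-, hF⟩ := hder
  have hFre : HasDerivAt (fun τ => (∫ x, conj (G x) * cx (η τ) x).re)
      (∫ x, conj (G x) * (-Rh ε μ (η t) x)).re t :=
    (Complex.reCLM.hasFDerivAt.comp_hasDerivAt t hF)
  have hmin : IsLocalMin (fun τ => En s (cx (η τ)) - 2 * (∫ x, conj (G x) * cx (η τ) x).re) t :=
    .of_forall fun τ => en_min s U (cx (η τ)) G hG
  have hz := hmin.hasDerivAt_eq_zero (hE'.sub (hFre.const_mul 2))
  have hi1 : Integrable (fun x => conj (G x) * sqrtTmul μ (dv U) x) := by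
    refine Integrable.mono' (G.integrable.norm.mul_const (‖(𝓕 (dv U)).toLp 1 volume‖))
      (hGc.mul (sqrtT_cont μ _)).aestronglyMeasurable (.of_forall fun x => ?_)
    rw [norm_mul, RCLike.norm_conj]
    gcongr
    exact sqrtT_bound _ _ _
  have hval : (∫ x, conj (G x) * (-Rh ε μ (η t) x)).re =
      -(ε * (∫ ξ, conj ((((1 + ξ ^ 2) ^ s : ℝ) : ℂ) * 𝓕 U ξ) * 𝓕 (pr U (dv U)) ξ).re) := by
    have e1 : ∀ x, conj (G x) * (-Rh ε μ (η t) x) =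
        -(conj (G x) * sqrtTmul μ (dv U) x + (ε : ℂ) * (conj (G x) * pr U (dv U) x)) := by
      intro x; simp only [Rh, U]; ring
    simp_rw [e1]
    rw [integral_neg, integral_add hi1 ((hIntg _).const_mul _), Complex.neg_re, Complex.add_re,
      disp_zero s μ U G hG, integral_const_mul, Complex.re_ofReal_mul, zero_add, planch, hG]
    simp only [wt_apply, Complex.real_smul]
  have hb2 := htri U (fun x => by simp [U, cx_apply]) M (linf_bound (η t))
  rw [hval] at hz
  have hb3 := neg_le_of_abs_le hb2
  have hb4 := mul_le_mul_of_nonneg_left hb3 hε.le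
  change E' ≤ 2 * C * ε * M * En s U
  nlinarith

end WhithamHelpers

/-- Energy estimate for the Whitham equation: for `s > 3/2`,
`ε, μ ∈ (0,1]`, there is `c = c(s)`, independent of `ε, μ, T`, such that any Schwartz-valued
`C¹`-in-time solution of `∂_t η + √T_μ(D) ∂_x η + (ε/2) ∂_x(η²) = 0` on `[0,T]` satisfies
`(d/dt)‖η(t)‖_{H^s}² ≤ c ε ‖∂_x η(t)‖_{L^∞} ‖η(t)‖_{H^s}²` for `t ∈ (0,T)`. -/
theorem whitham_energy_estimate (s : ℝ) (hs : 3 / 2 < s) :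
    ∃ c : ℝ, 0 < c ∧
      ∀ ε μ : ℝ, 0 < ε → ε ≤ 1 → 0 < μ → μ ≤ 1 →
        ∀ T : ℝ, 0 < T →
          ∀ η : ℝ → 𝓢(ℝ, ℝ), Continuous η →
            -- the Whitham equation `∂_t η = −(√T_μ(D) ∂_x η + (ε/2) ∂_x(η²))` on `[0,T]`
            (∀ t ∈ Set.Icc (0 : ℝ) T, ∀ x : ℝ,
              HasDerivAt (fun τ => ((η τ x : ℝ) : ℂ))
                (-(sqrtTmul μ (cc (deriv (⇑(η t)))) x +
                    (ε / 2 : ℂ) * ((deriv (fun y => (η t y) ^ 2) x : ℝ) : ℂ))) t) →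
            ∀ t ∈ Set.Ioo (0 : ℝ) T, ∀ E' : ℝ,
              HasDerivAt (fun τ => ((HsNorm s (cc ⇑(η τ))).toReal) ^ 2) E' t →
                E' ≤ c * ε * (eLpNorm (deriv (⇑(η t))) ⊤ volume).toReal *
                      ((HsNorm s (cc ⇑(η t))).toReal) ^ 2 := by
  exact main_est s hs
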